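/- arXiv:1602.05080 — 2 statements merged into one kernel-verified Lean document; each statement's English description precedes it below -/
import Mathlib

section
/- Let Y be a real n×m matrix with columns y₁,…,y_m, nonzero singular values σ₁ ≥ … ≥ σ_d > 0 (d = rank(Y)), and orthonormal left singular vectors ψ₁,…,ψ_d. Then for every ℓ ≤ d and every orthonormal family φ₁,…,φ_ℓ in ℝⁿ, Σ_{j=1}^{m} ‖y_j − Σ_{i=1}^{ℓ} ⟨y_j, φ_i⟩ φ_i‖² ≥ Σ_{i=ℓ+1}^{d} σ_i²; i.e., the first ℓ left singular vectors of Y solve the POD minimization problem min over orthonormal families of Σ_{j=1}^{m} ‖y_j − Σ_{i=1}^{ℓ} ⟨y_j, φ_i⟩ φ_i‖². -/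
open Matrix BigOperators

/-!
Let `P` be the orthogonal projection onto a subspace `K` of dimension at most `ℓ`; no approximation
of the snapshots from `K` is better than `P yⱼ`. Since the right singular vectors are orthonormal,
every linear map `T` satisfies `∑ⱼ ‖T yⱼ‖² = ∑ₖ σₖ² ‖T ψₖ‖²`; for `T = 1 - P` this makes the
projection error equal to `∑ₖ σₖ² (1 - wₖ)` with `wₖ = ‖P ψₖ‖²`. The weights satisfy `0 ≤ wₖ ≤ 1`
and, by Bessel's inequality, `∑ₖ wₖ ≤ ℓ`, so this sum is at least its value when `wₖ = 1` on the
`ℓ` largest singular values and `wₖ = 0` on the others.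
-/

section WeightedSums

variable {R : Type*} [Ring R] [PartialOrder R] [IsOrderedRing R]

theorem sum_compl_le_sum_mul_one_sub {κ : Type*} [Fintype κ] [DecidableEq κ] {a w : κ → R}
    {s : Finset κ} {c : R} (hc : 0 ≤ c) (hcs : ∀ k ∈ s, c ≤ a k) (hsc : ∀ k ∉ s, a k ≤ c)
    (hw₀ : ∀ k, 0 ≤ w k) (hw₁ : ∀ k, w k ≤ 1) (hw : ∑ k, w k ≤ s.card) :
    ∑ k ∈ sᶜ, a k ≤ ∑ k, a k * (1 - w k) := by
  have mass_outside_le : ∑ k ∈ sᶜ, w k ≤ ∑ k ∈ s, (1 - w k) := by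
    rw [← Finset.sum_add_sum_compl s, ← le_sub_iff_add_le'] at hw
    simpa only [Finset.sum_sub_distrib, Finset.sum_const, nsmul_one] using hw
  have loss_le_gain : ∑ k ∈ sᶜ, a k * w k ≤ ∑ k ∈ s, a k * (1 - w k) :=
    calc ∑ k ∈ sᶜ, a k * w k
        ≤ ∑ k ∈ sᶜ, c * w k := Finset.sum_le_sum fun k hk =>
          mul_le_mul_of_nonneg_right (hsc k (Finset.mem_compl.mp hk)) (hw₀ k)
      _ = c * ∑ k ∈ sᶜ, w k := (Finset.mul_sum ..).symm
      _ ≤ c * ∑ k ∈ s, (1 - w k) := mul_le_mul_of_nonneg_left mass_outside_le hc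
      _ = ∑ k ∈ s, c * (1 - w k) := Finset.mul_sum ..
      _ ≤ ∑ k ∈ s, a k * (1 - w k) := Finset.sum_le_sum fun k hk =>
          mul_le_mul_of_nonneg_right (hcs k hk) (sub_nonneg.mpr (hw₁ k))
  calc ∑ k ∈ sᶜ, a k
      = ∑ k ∈ sᶜ, a k * w k + ∑ k ∈ sᶜ, a k * (1 - w k) := by
        simp only [← Finset.sum_add_distrib, ← mul_add, add_sub_cancel, mul_one]
    _ ≤ ∑ k ∈ s, a k * (1 - w k) + ∑ k ∈ sᶜ, a k * (1 - w k) := by gcongr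
    _ = ∑ k, a k * (1 - w k) := Finset.sum_add_sum_compl s _

theorem sum_filter_le_sum_mul_one_sub_of_antitone {d ℓ : ℕ} {a w : Fin d → R}
    (ha : Antitone a) (ha₀ : ∀ k, 0 ≤ a k) (hw₀ : ∀ k, 0 ≤ w k) (hw₁ : ∀ k, w k ≤ 1)
    (hw : ∑ k, w k ≤ ℓ) :
    ∑ k ∈ {k : Fin d | ℓ ≤ (k : ℕ)}, a k ≤ ∑ k, a k * (1 - w k) := by
  rcases lt_or_ge ℓ d with hℓ | hℓ
  · let p : Fin d := ⟨ℓ, hℓ⟩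
    have tail_eq : Finset.univ.filter (fun k : Fin d => ℓ ≤ (k : ℕ)) = (Finset.Iio p)ᶜ := by
      ext k
      simp [p, Fin.le_def]
    rw [tail_eq]
    exact sum_compl_le_sum_mul_one_sub (ha₀ p) (fun k hk => ha (Finset.mem_Iio.mp hk).le)
      (fun k hk => ha (not_lt.mp (Finset.mem_Iio.not.mp hk))) hw₀ hw₁ (by simpa [p] using hw)
  · have tail_empty : Finset.univ.filter (fun k : Fin d => ℓ ≤ (k : ℕ)) = ∅ :=
      Finset.filter_eq_empty_iff.mpr fun k _ => not_le.mpr (k.isLt.trans_le hℓ)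
    rw [tail_empty, Finset.sum_empty]
    exact Finset.sum_nonneg fun k _ => mul_nonneg (ha₀ k) (sub_nonneg.mpr (hw₁ k))

end WeightedSums

section InnerProductSpace

variable {𝕜 E ι κ : Type*} [RCLike 𝕜] [NormedAddCommGroup E] [InnerProductSpace 𝕜 E]
  [Fintype ι] [Fintype κ]

theorem sum_norm_sq_sum_smul_of_orthonormal {v : κ → EuclideanSpace 𝕜 ι} (hv : Orthonormal 𝕜 v)
    (u : κ → E) : ∑ j, ‖∑ k, v k j • u k‖ ^ 2 = ∑ k, ‖u k‖ ^ 2 := by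
  classical
  have gram (k l : κ) : ∑ j, v l j * starRingEnd 𝕜 (v k j) = if k = l then 1 else 0 :=
    orthonormal_iff_ite.mp hv k l
  have expand (j : ι) : inner 𝕜 (∑ k, v k j • u k) (∑ l, v l j • u l) =
      ∑ l, ∑ k, v l j * starRingEnd 𝕜 (v k j) * inner 𝕜 (u k) (u l) := by
    simp only [sum_inner, inner_sum, inner_smul_left, inner_smul_right, Finset.mul_sum, mul_assoc]
  apply RCLike.ofReal_injective (K := 𝕜)
  push_cast
  simp only [← inner_self_eq_norm_sq_to_K (𝕜 := 𝕜), expand]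
  calc ∑ j, ∑ l, ∑ k, v l j * starRingEnd 𝕜 (v k j) * inner 𝕜 (u k) (u l)
      = ∑ l, ∑ k, (∑ j, v l j * starRingEnd 𝕜 (v k j)) * inner 𝕜 (u k) (u l) := by
        rw [Finset.sum_comm]
        simp only [Finset.sum_mul]
        exact Finset.sum_congr rfl fun l _ => Finset.sum_comm
    _ = ∑ k, inner 𝕜 (u k) (u k) := by simp [gram]

theorem sum_norm_sq_starProjection_le_finrank {ψ : κ → E} (hψ : Orthonormal 𝕜 ψ)
    (K : Submodule 𝕜 E) [FiniteDimensional 𝕜 K] :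
    ∑ k, ‖K.starProjection (ψ k)‖ ^ 2 ≤ Module.finrank 𝕜 K := by
  let b := stdOrthonormalBasis 𝕜 K
  have parseval (x : E) : ‖K.starProjection x‖ ^ 2 = ∑ i, ‖inner 𝕜 x (b i : E)‖ ^ 2 := by
    rw [K.starProjection_apply, Submodule.norm_coe, ← b.sum_sq_norm_inner_left]
    simp only [Submodule.inner_orthogonalProjectionOnto_eq_of_mem_right]
  calc ∑ k, ‖K.starProjection (ψ k)‖ ^ 2
      = ∑ i, ∑ k, ‖inner 𝕜 (ψ k) (b i : E)‖ ^ 2 := by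
        simp only [parseval]
        exact Finset.sum_comm
    _ ≤ ∑ i, ‖(b i : E)‖ ^ 2 := Finset.sum_le_sum fun i _ => hψ.sum_inner_products_le _
    _ = Module.finrank 𝕜 K := by simp [Submodule.norm_coe, b.norm_eq_one]

theorem norm_starProjection_orthogonal_le_norm_sub (K : Submodule 𝕜 E)
    [K.HasOrthogonalProjection] (x : E) {z : E} (hz : z ∈ K) :
    ‖Kᗮ.starProjection x‖ ≤ ‖x - z‖ := by
  have proj_sub : Kᗮ.starProjection (x - z) = Kᗮ.starProjection x := by
    rw [map_sub, Kᗮ.starProjection_apply_eq_zero_iff.mpr (K.le_orthogonal_orthogonal hz), sub_zero]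
  exact proj_sub ▸ Kᗮ.norm_starProjection_apply_le (x - z)

theorem sum_norm_sq_map_svd {F : Type*} [NormedAddCommGroup F] [InnerProductSpace 𝕜 F]
    (T : E →ₗ[𝕜] F) (σ : κ → ℝ) (ψ : κ → E) {v : κ → EuclideanSpace 𝕜 ι} (hv : Orthonormal 𝕜 v) :
    ∑ j, ‖T (∑ k, ((σ k : 𝕜) * v k j) • ψ k)‖ ^ 2 = ∑ k, σ k ^ 2 * ‖T (ψ k)‖ ^ 2 := by
  calc ∑ j, ‖T (∑ k, ((σ k : 𝕜) * v k j) • ψ k)‖ ^ 2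
      = ∑ j, ‖∑ k, v k j • (σ k : 𝕜) • T (ψ k)‖ ^ 2 := by
        simp only [map_sum, map_smul, smul_smul, mul_comm]
    _ = ∑ k, ‖(σ k : 𝕜) • T (ψ k)‖ ^ 2 := sum_norm_sq_sum_smul_of_orthonormal hv _
    _ = ∑ k, σ k ^ 2 * ‖T (ψ k)‖ ^ 2 := by
        simp only [norm_smul, mul_pow, RCLike.norm_ofReal, sq_abs]

theorem pod_optimality_general {d ℓ : ℕ} {y z : ι → E} {σ : Fin d → ℝ} {ψ : Fin d → E}
    {v : Fin d → EuclideanSpace 𝕜 ι} (hσ₀ : ∀ k, 0 ≤ σ k) (hσ : Antitone σ)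
    (hψ : Orthonormal 𝕜 ψ) (hv : Orthonormal 𝕜 v)
    (hy : ∀ j, y j = ∑ k, ((σ k : 𝕜) * v k j) • ψ k)
    (K : Submodule 𝕜 E) [FiniteDimensional 𝕜 K] (hK : Module.finrank 𝕜 K ≤ ℓ)
    (hz : ∀ j, z j ∈ K) :
    ∑ k ∈ {k : Fin d | ℓ ≤ (k : ℕ)}, σ k ^ 2 ≤ ∑ j, ‖y j - z j‖ ^ 2 := by
  let w (k : Fin d) : ℝ := ‖K.starProjection (ψ k)‖ ^ 2
  have pythagoras (k : Fin d) : ‖Kᗮ.starProjection (ψ k)‖ ^ 2 = 1 - w k := by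
    rw [eq_sub_iff_add_eq', ← K.norm_sq_eq_add_norm_sq_starProjection, hψ.norm_eq_one, one_pow]
  have w_le_one (k : Fin d) : w k ≤ 1 := sub_nonneg.mp (pythagoras k ▸ sq_nonneg _)
  have sum_w_le : ∑ k, w k ≤ ℓ :=
    (sum_norm_sq_starProjection_le_finrank hψ K).trans (Nat.cast_le.mpr hK)
  have σ_sq_antitone : Antitone fun k => σ k ^ 2 := fun _ k h =>
    pow_le_pow_left₀ (hσ₀ k) (hσ h) 2
  calc ∑ k ∈ {k : Fin d | ℓ ≤ (k : ℕ)}, σ k ^ 2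
      ≤ ∑ k, σ k ^ 2 * (1 - w k) := sum_filter_le_sum_mul_one_sub_of_antitone σ_sq_antitone
        (fun _ => sq_nonneg _) (fun _ => sq_nonneg _) w_le_one sum_w_le
    _ = ∑ j, ‖Kᗮ.starProjection (y j)‖ ^ 2 := by
        simp only [← pythagoras, hy]
        exact (sum_norm_sq_map_svd Kᗮ.starProjection.toLinearMap σ ψ hv).symm
    _ ≤ ∑ j, ‖y j - z j‖ ^ 2 := by
        gcongr with j
        exact norm_starProjection_orthogonal_le_norm_sub K (y j) (hz j)

end InnerProductSpace

section DotProduct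

variable {ι κ : Type*} [Fintype ι]

theorem orthonormal_toLp_iff_dotProduct [DecidableEq κ] {u : κ → ι → ℝ} :
    Orthonormal ℝ (fun k => WithLp.toLp 2 (u k)) ↔
      ∀ k l, u k ⬝ᵥ u l = if k = l then 1 else 0 := by
  simp only [orthonormal_iff_ite, EuclideanSpace.inner_toLp_toLp, star_trivial,
    dotProduct_comm (u _) (u _)]

theorem norm_toLp_sq_eq_dotProduct (x : ι → ℝ) : ‖WithLp.toLp 2 x‖ ^ 2 = x ⬝ᵥ x := by
  rw [← real_inner_self_eq_norm_sq, EuclideanSpace.inner_toLp_toLp, star_trivial]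

end DotProduct

/-- POD optimality: for any orthonormal family `φ₁,…,φ_ℓ` in `ℝⁿ`, the projection error of the
snapshot columns is at least the sum of the squared neglected singular values, which is attained
by the first `ℓ` left singular vectors. -/
theorem pod_optimality
    (n m d : ℕ)
    (y : Fin m → (Fin n → ℝ))              -- columns of Y
    (σ : Fin d → ℝ)                         -- nonzero singular values
    (ψ : Fin d → (Fin n → ℝ))               -- left singular vectors
    (v : Fin d → (Fin m → ℝ))               -- right singular vectors
    (hσpos : ∀ i, 0 < σ i)
    (hσdec : ∀ i j : Fin d, i ≤ j → σ j ≤ σ i)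
    (hψ : ∀ i j : Fin d, ψ i ⬝ᵥ ψ j = if i = j then 1 else 0)
    (hv : ∀ i j : Fin d, v i ⬝ᵥ v j = if i = j then 1 else 0)
    (hSVD : ∀ j : Fin m, y j = ∑ i : Fin d, (σ i * v i j) • ψ i)
    (ℓ : ℕ) (hℓd : ℓ ≤ d)
    (φ : Fin ℓ → (Fin n → ℝ))
    (hφ : ∀ i j : Fin ℓ, φ i ⬝ᵥ φ j = if i = j then 1 else 0) :
    ∑ j : Fin m,
      (y j - ∑ i : Fin ℓ, (y j ⬝ᵥ φ i) • φ i) ⬝ᵥ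
      (y j - ∑ i : Fin ℓ, (y j ⬝ᵥ φ i) • φ i)
      ≥ ∑ i ∈ Finset.univ.filter (fun i : Fin d => ℓ ≤ (i : ℕ)), (σ i) ^ 2 := by
  let K := Submodule.span ℝ (Set.range fun i => WithLp.toLp 2 (φ i))
  have finrank_K_le : Module.finrank ℝ K ≤ ℓ := by
    simpa only [Fintype.card_fin] using! finrank_range_le_card fun i => WithLp.toLp 2 (φ i)
  have approx_mem (j : Fin m) : WithLp.toLp 2 (∑ i, (y j ⬝ᵥ φ i) • φ i) ∈ K := by
    simp only [WithLp.toLp_sum, WithLp.toLp_smul]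
    exact K.sum_mem fun i _ => K.smul_mem _ (Submodule.subset_span ⟨i, rfl⟩)
  have svd (j : Fin m) : WithLp.toLp 2 (y j) =
      ∑ k, (σ k * WithLp.toLp 2 (v k) j) • WithLp.toLp 2 (ψ k) := by
    simp only [hSVD j, WithLp.toLp_sum, WithLp.toLp_smul]
  have bound := pod_optimality_general (fun k => (hσpos k).le) (fun i j => hσdec i j)
    (orthonormal_toLp_iff_dotProduct.mpr hψ) (orthonormal_toLp_iff_dotProduct.mpr hv) svd
    K finrank_K_le approx_mem
  simpa only [← WithLp.toLp_sub, norm_toLp_sq_eq_dotProduct] using bound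
end

section
/- Let Y, Y' ∈ ℂ^{n×(m)} and suppose Y = U Σ V* is a reduced singular value decomposition with U* U = I_k, V* V = I_k, and Σ ∈ ℝ^{k×k} diagonal, invertible, with positive entries. Define the DMD operator A_y := Y' V Σ^{-1} U* (i.e. A_y = Y' Y† with Y† the Moore–Penrose pseudoinverse of Y) and the projected matrix Ã := U* Y' V Σ^{-1}. If w ∈ ℂ^k is an eigenvector of Ã with eigenvalue λ ≠ 0, i.e. Ã w = λ w and w ≠ 0, then ψ := Y' V Σ^{-1} w is nonzero and is an eigenvector of A_y with the same eigenvalue: A_y ψ = λ ψ. -/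
open Matrix BigOperators

section MulVecSwap

variable {m n R : Type*} [Fintype m] [Fintype n] [NonUnitalSemiring R]

theorem mulVec_ne_zero_of_mul_mulVec_ne_zero {l : Type*} {A : Matrix l m R} {B : Matrix m n R}
    {v : n → R} (h : (A * B) *ᵥ v ≠ 0) : B *ᵥ v ≠ 0 := by
  intro hBv
  rw [← mulVec_mulVec, hBv, mulVec_zero] at h
  exact h rfl

theorem mul_mulVec_mulVec_eq_smul_of_mul_mulVec_eq_smul {S : Type*} [DistribSMul S R]
    [SMulCommClass S R R] {A : Matrix m n R} {B : Matrix n m R} {v : m → R} {c : S}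
    (h : (A * B) *ᵥ v = c • v) :
    (B * A) *ᵥ (B *ᵥ v) = c • (B *ᵥ v) :=
  calc (B * A) *ᵥ (B *ᵥ v) = B *ᵥ ((A * B) *ᵥ v) := by
        simp only [mulVec_mulVec, Matrix.mul_assoc]
    _ = c • (B *ᵥ v) := by rw [h, mulVec_smul]

end MulVecSwap

/-- The product `X * W` takes the place of `Y† = (V Σ⁻¹) U*`, so that `Y' * X * W` is the DMD
operator and `W * Y' * X` the projected matrix. -/
theorem exact_dmd_modes_general {m n k R : Type*} [Fintype m] [Fintype n] [Fintype k]
    [CommSemiring R] [IsCancelMulZero R] (Y' : Matrix n m R) (X : Matrix m k R) (W : Matrix k n R)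
    {w : k → R} {c : R} (hc : c ≠ 0) (hw : w ≠ 0) (heig : (W * Y' * X) *ᵥ w = c • w) :
    (Y' * X) *ᵥ w ≠ 0 ∧ (Y' * X * W) *ᵥ ((Y' * X) *ᵥ w) = c • ((Y' * X) *ᵥ w) := by
  rw [Matrix.mul_assoc] at heig
  have hne : (W * (Y' * X)) *ᵥ w ≠ 0 := heig ▸ smul_ne_zero hc hw
  exact ⟨mulVec_ne_zero_of_mul_mulVec_ne_zero hne,
    mul_mulVec_mulVec_eq_smul_of_mul_mulVec_eq_smul heig⟩

/-- Exact DMD modes: if `w` is an eigenvector of the projected matrix `Ã = U* Y' V Σ⁻¹` with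
eigenvalue `λ ≠ 0`, then `ψ = Y' V Σ⁻¹ w` is nonzero and is an eigenvector of the full DMD
operator `A_y = Y' V Σ⁻¹ U*` with the same eigenvalue. -/
theorem exact_dmd_modes
    (n m k : ℕ)
    (Y Y' : Matrix (Fin n) (Fin m) ℂ)
    (U : Matrix (Fin n) (Fin k) ℂ)
    (V : Matrix (Fin m) (Fin k) ℂ)
    (σ : Fin k → ℝ)
    (hσ : ∀ i, 0 < σ i)
    (hU : Uᴴ * U = 1)
    (hV : Vᴴ * V = 1)
    (hSVD : Y = U * Matrix.diagonal (fun i => (σ i : ℂ)) * Vᴴ)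
    (w : Fin k → ℂ) (lam : ℂ)
    (hlam : lam ≠ 0) (hw : w ≠ 0)
    (heig : (Uᴴ * Y' * V * (Matrix.diagonal (fun i => (σ i : ℂ)))⁻¹) *ᵥ w = lam • w) :
    (Y' * V * (Matrix.diagonal (fun i => (σ i : ℂ)))⁻¹) *ᵥ w ≠ 0 ∧
    (Y' * V * (Matrix.diagonal (fun i => (σ i : ℂ)))⁻¹ * Uᴴ) *ᵥ
        ((Y' * V * (Matrix.diagonal (fun i => (σ i : ℂ)))⁻¹) *ᵥ w)
      = lam • ((Y' * V * (Matrix.diagonal (fun i => (σ i : ℂ)))⁻¹) *ᵥ w) := by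
  simp only [Matrix.mul_assoc _ V] at heig ⊢
  exact exact_dmd_modes_general Y' _ Uᴴ hlam hw heig
end
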